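/- Let M be a manifold with a transversely holomorphic foliation F of complex codimension q whose basic Dolbeault cohomology groups are finite dimensional. Then for every k: Σ_{p+q=k} (dim_C H^{p,q}_{BC}(M/F) + dim_C H^{p,q}_A(M/F)) ≥ 2 dim_C H^k(M/F, C), with equality for all k if and only if the basic Dolbeault double complex of F satisfies the ∂∂̄-lemma. -/

import Mathlib

open LinearMap

/-- The (cardinal) dimension of the quotient `A / (A ∩ B)` of submodules. -/
noncomputable def qrank {V : Type*} [AddCommGroup V] [Module ℂ V]
    (A B : Submodule ℂ V) : Cardinal :=
  Module.rank ℂ (↥A ⧸ B.comap A.subtype)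

/-- The total-degree-`k` piece `⨁_{a+b=k} V^{a,b}` of a bigraded space. -/
def totalPiece {V : Type*} [AddCommGroup V] [Module ℂ V]
    (𝒱 : ℕ × ℕ → Submodule ℂ V) (k : ℕ) : Submodule ℂ V :=
  ⨆ a ∈ Finset.range (k + 1), 𝒱 (a, k - a)

section FrolicherHelpers
variable {V : Type*} [AddCommGroup V] [Module ℂ V]

theorem cardinal_sum_fin : ∀ (n : ℕ) (f : Fin n → Cardinal), Cardinal.sum f = ∑ i, f i := by
  intro n
  induction n with
  | zero => intro f; simp [Cardinal.sum]
  | succ n ih =>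
    intro f
    rw [Fin.sum_univ_succ, ← ih]
    refine (Cardinal.mk_congr (?_ : (Σ i, (f i).out) ≃ (f 0).out ⊕ Σ i : Fin n, (f i.succ).out)).trans ?_
    · refine ((Equiv.sigmaCongrLeft (β := fun i => (f i).out) (finSumFinEquiv.trans (finCongr (add_comm 1 n)))).symm.trans
        (Equiv.sumSigmaDistrib _)).trans (Equiv.sumCongr ?_ ?_)
      · exact Equiv.uniqueSigma _
      · refine Equiv.sigmaCongrRight fun i => Equiv.cast ?_
        congr 2
        ext; simp
    · simp only [Cardinal.mk_sum, Cardinal.mk_out, Cardinal.lift_id, Cardinal.mk_sigma]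

theorem qrank_eq_map (A B : Submodule ℂ V) : qrank A B = Module.rank ℂ (A.map B.mkQ) := by
  have h := LinearMap.quotKerEquivRange (B.mkQ ∘ₗ A.subtype)
  have hk : ker (B.mkQ ∘ₗ A.subtype) = B.comap A.subtype := by
    rw [LinearMap.ker_comp, Submodule.ker_mkQ]
  have hr : range (B.mkQ ∘ₗ A.subtype) = A.map B.mkQ := by
    rw [LinearMap.range_comp, Submodule.range_subtype]
  rw [hk, hr] at h
  exact h.rank_eq

theorem qrank_eq_zero (A B : Submodule ℂ V) (h : A ≤ B) : qrank A B = 0 := by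
  rw [qrank_eq_map]
  have : A.map B.mkQ = ⊥ := by
    rw [← le_bot_iff, Submodule.map_le_iff_le_comap]
    intro x hx
    simpa using h hx
  rw [this]; simp

theorem qrank_add (A B C : Submodule ℂ V) (h : B ≤ C) :
    qrank A B = qrank A C + qrank (A ⊓ C) B := by
  rw [qrank_eq_map A B, qrank_eq_map A C, qrank_eq_map (A ⊓ C) B]
  let g : (A.map B.mkQ) →ₗ[ℂ] (V ⧸ C) := (Submodule.factor h) ∘ₗ (A.map B.mkQ).subtype
  rw [← LinearMap.rank_range_add_rank_ker g]
  have hr : range g = A.map C.mkQ := by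
    rw [LinearMap.range_comp, Submodule.range_subtype, ← Submodule.map_comp]
    congr 1
  have hk : (ker g).map (A.map B.mkQ).subtype = (A ⊓ C).map B.mkQ := by
    ext z
    constructor
    · rintro ⟨⟨_, a, ha, rfl⟩, hz, rfl⟩
      refine ⟨a, ⟨ha, ?_⟩, rfl⟩
      have : C.mkQ a = 0 := hz
      simpa using this
    · rintro ⟨a, ⟨ha, hc⟩, rfl⟩
      refine ⟨⟨B.mkQ a, a, ha, rfl⟩, ?_, rfl⟩
      change C.mkQ a = 0
      simpa using hc
  have hk' := ((ker g).equivMapOfInjective _ (A.map B.mkQ).injective_subtype).rank_eq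
  rw [hr, hk', hk]

theorem qrank_add' (K S D : Submodule ℂ V) (h : D ≤ K) :
    qrank K S = qrank K (S ⊔ D) + qrank D S := by
  rw [qrank_add K S (S ⊔ D) le_sup_left, qrank_eq_map (K ⊓ _), qrank_eq_map D]
  have : (K ⊓ (S ⊔ D)).map S.mkQ = D.map S.mkQ := by
    apply le_antisymm
    · refine (Submodule.map_mono inf_le_right).trans ?_
      rw [Submodule.map_sup]
      simp
    · exact Submodule.map_mono (le_inf h le_sup_right)
  rw [this]

theorem qrank_le_inj (A B A' B' : Submodule ℂ V) (f : V →ₗ[ℂ] V)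
    (hA : ∀ x ∈ A, f x ∈ A') (hB : ∀ x ∈ A, f x ∈ B' → x ∈ B) :
    qrank A B ≤ qrank A' B' := by
  let g : A →ₗ[ℂ] (↥A' ⧸ B'.comap A'.subtype) := (Submodule.mkQ _) ∘ₗ (f.restrict hA)
  have hk : ker g ≤ B.comap A.subtype := by
    intro x hx
    have : f x ∈ B' := by simpa [g] using hx
    exact hB x x.2 this
  calc qrank A B ≤ Module.rank ℂ (↥A ⧸ ker g) :=
        LinearMap.rank_le_of_surjective (Submodule.factor hk) (Submodule.factor_surjective hk)
    _ = Module.rank ℂ (range g) := (LinearMap.quotKerEquivRange g).rank_eq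
    _ ≤ _ := Submodule.rank_le _

theorem qrank_le_surj (A B A' B' : Submodule ℂ V) (f : V →ₗ[ℂ] V)
    (hA : ∀ x ∈ A, f x ∈ A') (hB : ∀ x ∈ A, x ∈ B → f x ∈ B')
    (hs : ∀ y ∈ A', ∃ x ∈ A, y - f x ∈ B') :
    qrank A' B' ≤ qrank A B := by
  let g : (↥A ⧸ B.comap A.subtype) →ₗ[ℂ] (↥A' ⧸ B'.comap A'.subtype) :=
    Submodule.mapQ _ _ (f.restrict hA) (fun x hx => hB x x.2 hx)
  refine LinearMap.rank_le_of_surjective g ?_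
  intro y
  obtain ⟨y, rfl⟩ := Submodule.Quotient.mk_surjective _ y
  obtain ⟨x, hx, hxy⟩ := hs y y.2
  refine ⟨Submodule.Quotient.mk ⟨x, hx⟩, ?_⟩
  symm
  rw [show ∀ x, g (Submodule.Quotient.mk x) = Submodule.Quotient.mk (f.restrict hA x) from fun _ => rfl, Submodule.Quotient.eq]
  exact hxy

theorem qrank_bij (A B A' B' : Submodule ℂ V) (f : V →ₗ[ℂ] V)
    (hA : ∀ x ∈ A, f x ∈ A') (hB : ∀ x ∈ A, x ∈ B → f x ∈ B')
    (hfin : qrank A B < Cardinal.aleph0) (heq : qrank A B = qrank A' B') :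
    (∀ x ∈ A, f x ∈ B' → x ∈ B) ↔ (∀ y ∈ A', ∃ x ∈ A, y - f x ∈ B') := by
  let g : (↥A ⧸ B.comap A.subtype) →ₗ[ℂ] (↥A' ⧸ B'.comap A'.subtype) :=
    Submodule.mapQ _ _ (f.restrict hA) (fun x hx => hB x x.2 hx)
  have : FiniteDimensional ℂ (↥A ⧸ B.comap A.subtype) := Module.rank_lt_aleph0_iff.1 hfin
  have : FiniteDimensional ℂ (↥A' ⧸ B'.comap A'.subtype) :=
    Module.rank_lt_aleph0_iff.1 (by rw [heq] at hfin; exact hfin)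
  have hfr : Module.finrank ℂ (↥A ⧸ B.comap A.subtype) =
      Module.finrank ℂ (↥A' ⧸ B'.comap A'.subtype) := congrArg Cardinal.toNat heq
  have key := LinearMap.injective_iff_surjective_of_finrank_eq_finrank (f := g) hfr
  have h1 : Function.Injective g ↔ (∀ x ∈ A, f x ∈ B' → x ∈ B) := by
    rw [injective_iff_map_eq_zero]
    constructor
    · intro h x hx hfx
      have := h (Submodule.Quotient.mk ⟨x, hx⟩) (by
        rw [show ∀ x, g (Submodule.Quotient.mk x) = Submodule.Quotient.mk (f.restrict hA x) from fun _ => rfl, Submodule.Quotient.mk_eq_zero]; exact hfx)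
      rw [Submodule.Quotient.mk_eq_zero] at this
      exact this
    · intro h x
      obtain ⟨x, rfl⟩ := Submodule.Quotient.mk_surjective _ x
      intro hx
      rw [show ∀ x, g (Submodule.Quotient.mk x) = Submodule.Quotient.mk (f.restrict hA x) from fun _ => rfl, Submodule.Quotient.mk_eq_zero] at hx
      rw [Submodule.Quotient.mk_eq_zero]
      exact h x x.2 hx
  have h2 : Function.Surjective g ↔ (∀ y ∈ A', ∃ x ∈ A, y - f x ∈ B') := by
    constructor
    · intro h y hy
      obtain ⟨x, hx⟩ := h (Submodule.Quotient.mk ⟨y, hy⟩)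
      obtain ⟨x, rfl⟩ := Submodule.Quotient.mk_surjective _ x
      refine ⟨x, x.2, ?_⟩
      have hx := hx.symm
      rw [show ∀ x, g (Submodule.Quotient.mk x) = Submodule.Quotient.mk (f.restrict hA x) from fun _ => rfl, Submodule.Quotient.eq] at hx
      exact hx
    · intro hs y
      obtain ⟨y, rfl⟩ := Submodule.Quotient.mk_surjective _ y
      obtain ⟨x, hx, hxy⟩ := hs y y.2
      refine ⟨Submodule.Quotient.mk ⟨x, hx⟩, ?_⟩
      symm
      rw [show ∀ x, g (Submodule.Quotient.mk x) = Submodule.Quotient.mk (f.restrict hA x) from fun _ => rfl, Submodule.Quotient.eq]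
      exact hxy
  rw [← h1, ← h2, key]

variable {𝒱 : ℕ × ℕ → Submodule ℂ V}

/-- The operator acting on `𝒱 ab` as multiplication by `f ab`. -/
noncomputable def diagOp (h : DirectSum.IsInternal 𝒱) (f : ℕ × ℕ → ℂ) : V →ₗ[ℂ] V :=
  (DirectSum.toModule ℂ (ℕ × ℕ) V (fun i => f i • (𝒱 i).subtype)) ∘ₗ
    (LinearEquiv.ofBijective (DirectSum.coeLinearMap 𝒱) h).symm.toLinearMap

theorem diagOp_apply (h : DirectSum.IsInternal 𝒱) (f : ℕ × ℕ → ℂ) (i : ℕ × ℕ) (x : V)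
    (hx : x ∈ 𝒱 i) : diagOp h f x = f i • x := by
  have : (LinearEquiv.ofBijective (DirectSum.coeLinearMap 𝒱) h).symm x =
      DirectSum.lof ℂ (ℕ × ℕ) (fun i => 𝒱 i) i ⟨x, hx⟩ := by
    rw [LinearEquiv.symm_apply_eq]
    exact (DirectSum.coeLinearMap_lof 𝒱 i ⟨x, hx⟩).symm
  unfold diagOp
  rw [LinearMap.comp_apply, LinearEquiv.coe_coe, this, DirectSum.toModule_lof]
  rfl

theorem lin_ext (h : DirectSum.IsInternal 𝒱) (f g : V →ₗ[ℂ] V)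
    (hfg : ∀ i, ∀ x ∈ 𝒱 i, f x = g x) (x : V) : f x = g x := by
  have hx : x ∈ ⨆ i, 𝒱 i := by rw [h.submodule_iSup_eq_top]; trivial
  induction hx using Submodule.iSup_induction' with
  | mem i x hx => exact hfg i x hx
  | zero => simp
  | add x y _ _ hx hy => simp [hx, hy]

theorem diagOp_mul (h : DirectSum.IsInternal 𝒱) (f g : ℕ × ℕ → ℂ) (x : V) :
    diagOp h f (diagOp h g x) = diagOp h (f * g) x := by
  refine lin_ext h (diagOp h f ∘ₗ diagOp h g) (diagOp h (f * g)) (fun i x hx => ?_) x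
  simp [diagOp_apply h _ i x hx, mul_smul, smul_comm (f i)]

theorem diagOp_add (h : DirectSum.IsInternal 𝒱) (f g : ℕ × ℕ → ℂ) (x : V) :
    diagOp h (f + g) x = diagOp h f x + diagOp h g x := by
  refine lin_ext h (diagOp h (f + g)) (diagOp h f + diagOp h g) (fun i x hx => ?_) x
  simp [diagOp_apply h _ i x hx, add_smul]

theorem diagOp_zero (h : DirectSum.IsInternal 𝒱) (x : V) :
    diagOp h 0 x = 0 := by
  refine lin_ext h (diagOp h 0) 0 (fun i x hx => ?_) x
  simp [diagOp_apply h _ i x hx]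

theorem diagOp_dp (h : DirectSum.IsInternal 𝒱) (dp : V →ₗ[ℂ] V)
    (hdeg : ∀ a b : ℕ, ∀ x ∈ 𝒱 (a, b), dp x ∈ 𝒱 (a + 1, b)) (f : ℕ × ℕ → ℂ) (x : V) :
    diagOp h f (dp x) = dp (diagOp h (fun i => f (i.1 + 1, i.2)) x) := by
  refine lin_ext h (diagOp h f ∘ₗ dp) (dp ∘ₗ diagOp h _) (fun i x hx => ?_) x
  simp [diagOp_apply h _ i x hx, diagOp_apply h _ _ _ (hdeg i.1 i.2 x hx)]

theorem diagOp_db (h : DirectSum.IsInternal 𝒱) (db : V →ₗ[ℂ] V)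
    (hdeg : ∀ a b : ℕ, ∀ x ∈ 𝒱 (a, b), db x ∈ 𝒱 (a, b + 1)) (f : ℕ × ℕ → ℂ) (x : V) :
    diagOp h f (db x) = db (diagOp h (fun i => f (i.1, i.2 + 1)) x) := by
  refine lin_ext h (diagOp h f ∘ₗ db) (db ∘ₗ diagOp h _) (fun i x hx => ?_) x
  simp [diagOp_apply h _ i x hx, diagOp_apply h _ _ _ (hdeg i.1 i.2 x hx)]

/-- Indicator of a bidegree. -/
noncomputable def indBi (c : ℕ × ℕ) : ℕ × ℕ → ℂ := fun i => if i = c then 1 else 0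

/-- Indicator of a total degree. -/
noncomputable def indTot (k : ℕ) : ℕ × ℕ → ℂ := fun i => if i.1 + i.2 = k then 1 else 0

theorem diagOp_indBi_mem (h : DirectSum.IsInternal 𝒱) (c : ℕ × ℕ) (x : V) :
    diagOp h (indBi c) x ∈ 𝒱 c := by
  have hx : x ∈ ⨆ i, 𝒱 i := by rw [h.submodule_iSup_eq_top]; trivial
  induction hx using Submodule.iSup_induction' with
  | mem i x hx =>
    rw [diagOp_apply h _ i x hx, indBi]
    split_ifs with hi
    · rw [← hi, one_smul]; exact hx
    · simp
  | zero => simp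
  | add x y _ _ hx hy => rw [map_add]; exact Submodule.add_mem _ hx hy

theorem diagOp_indBi_self (h : DirectSum.IsInternal 𝒱) (c : ℕ × ℕ) (x : V) (hx : x ∈ 𝒱 c) :
    diagOp h (indBi c) x = x := by
  simp [diagOp_apply h _ c x hx, indBi]

theorem diagOp_indTot (h : DirectSum.IsInternal 𝒱) (k : ℕ) (x : V) :
    diagOp h (indTot k) x = ∑ a ∈ Finset.range (k + 1), diagOp h (indBi (a, k - a)) x := by
  have := lin_ext h (diagOp h (indTot k))
    (∑ a ∈ Finset.range (k + 1), diagOp h (indBi (a, k - a))) (fun i x hx => ?_) x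
  · simpa using this
  simp only [LinearMap.sum_apply, diagOp_apply h _ i x hx, ← Finset.sum_smul]
  congr 1
  obtain ⟨a, b⟩ := i
  simp only [indTot, indBi, Prod.mk.injEq]
  split_ifs with hab
  · rw [Finset.sum_eq_single a]
    · rw [if_pos]; omega
    · intro c _ hc; rw [if_neg]; omega
    · intro hc; simp at hc; omega
  · symm; apply Finset.sum_eq_zero
    intro c hc; simp at hc; rw [if_neg]; omega

theorem mem_totalPiece (h : DirectSum.IsInternal 𝒱) (k : ℕ) (x : V) :
    x ∈ totalPiece 𝒱 k ↔ diagOp h (indTot k) x = x := by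
  constructor
  · intro hx
    have hle : totalPiece 𝒱 k ≤ ker (diagOp h (indTot k) - LinearMap.id) := by
      refine iSup₂_le fun a ha x hx => ?_
      simp at ha
      have : a + (k - a) = k := by omega
      simp [diagOp_apply h _ _ x hx, indTot, this]
    have := hle hx
    simpa [sub_eq_zero] using this
  · intro hx
    rw [← hx, diagOp_indTot]
    refine Submodule.sum_mem _ fun a ha => ?_
    exact Submodule.mem_iSup_of_mem a (Submodule.mem_iSup_of_mem ha (diagOp_indBi_mem h _ x))

theorem qrank_total (h : DirectSum.IsInternal 𝒱) (k : ℕ) (A B : Submodule ℂ V)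
    (hA : ∀ f, ∀ x ∈ A, diagOp h f x ∈ A) (hB : ∀ f, ∀ x ∈ B, diagOp h f x ∈ B) :
    ∑ a ∈ Finset.range (k + 1), qrank (A ⊓ 𝒱 (a, k - a)) B = qrank (A ⊓ totalPiece 𝒱 k) B := by
  rw [Finset.sum_range]
  let W : Fin (k + 1) → Submodule ℂ V := fun a => A ⊓ 𝒱 (a, k - a)
  let φ : ↥(A ⊓ totalPiece 𝒱 k) →ₗ[ℂ] (∀ a : Fin (k + 1), ↥(W a) ⧸ B.comap (W a).subtype) :=
    LinearMap.pi fun a => (Submodule.mkQ _) ∘ₗ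
      (diagOp h (indBi (a, k - a))).restrict (p := A ⊓ totalPiece 𝒱 k) (q := W a)
        (fun x hx => ⟨hA _ x hx.1, diagOp_indBi_mem h _ x⟩)
  have hφ : ∀ x a, φ x a = 0 ↔ diagOp h (indBi (a, k - a)) (x : V) ∈ B := by
    intro x a
    change Submodule.Quotient.mk _ = 0 ↔ _
    rw [Submodule.Quotient.mk_eq_zero]
    rfl
  have hk : ker φ = B.comap (A ⊓ totalPiece 𝒱 k).subtype := by
    ext x
    rw [LinearMap.mem_ker, funext_iff]
    simp only [Pi.zero_apply, hφ]
    constructor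
    · intro hx
      change (x : V) ∈ B
      rw [← (mem_totalPiece h k x).1 x.2.2, diagOp_indTot, Finset.sum_range]
      exact Submodule.sum_mem _ fun a _ => hx a
    · intro hx a
      exact hB _ _ hx
  have hs : Function.Surjective φ := by
    intro y
    have : ∀ a, ∃ z : W a, Submodule.Quotient.mk z = y a :=
      fun a => Submodule.Quotient.mk_surjective _ (y a)
    choose z hz using this
    refine ⟨⟨∑ a, (z a : V), ?_, ?_⟩, ?_⟩
    · exact Submodule.sum_mem _ fun a _ => (z a).2.1
    · exact Submodule.sum_mem _ fun a _ => Submodule.mem_iSup_of_mem (a : ℕ)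
        (Submodule.mem_iSup_of_mem (Finset.mem_range.2 a.2) (z a).2.2)
    · funext a
      rw [← hz a]
      change Submodule.Quotient.mk _ = _
      congr 1
      apply Subtype.ext
      change diagOp h (indBi (a, k - a)) (∑ a, (z a : V)) = z a
      rw [map_sum, Finset.sum_eq_single a]
      · exact diagOp_indBi_self h _ _ (z a).2.2
      · intro b _ hb
        rw [diagOp_apply h _ _ _ (z b).2.2, indBi, if_neg, zero_smul]
        intro h'
        apply hb
        apply Fin.ext
        exact (Prod.mk.inj h').1
      · simp
  have e := (LinearMap.quotKerEquivOfSurjective φ hs).rank_eq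
  rw [hk] at e
  have e2 : qrank (A ⊓ totalPiece 𝒱 k) B = _ := e
  rw [e2, rank_pi]
  rw [cardinal_sum_fin]
  rfl

end FrolicherHelpers

section FrolicherHelpers2
variable {V : Type*} [AddCommGroup V] [Module ℂ V] {𝒱 : ℕ × ℕ → Submodule ℂ V}

theorem stable_range_dp (h : DirectSum.IsInternal 𝒱) (dp : V →ₗ[ℂ] V)
    (hdeg : ∀ a b : ℕ, ∀ x ∈ 𝒱 (a, b), dp x ∈ 𝒱 (a + 1, b)) (f : ℕ × ℕ → ℂ) (x : V)
    (hx : x ∈ range dp) : diagOp h f x ∈ range dp := by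
  obtain ⟨y, rfl⟩ := hx
  rw [diagOp_dp h dp hdeg]
  exact ⟨_, rfl⟩

theorem stable_range_db (h : DirectSum.IsInternal 𝒱) (db : V →ₗ[ℂ] V)
    (hdeg : ∀ a b : ℕ, ∀ x ∈ 𝒱 (a, b), db x ∈ 𝒱 (a, b + 1)) (f : ℕ × ℕ → ℂ) (x : V)
    (hx : x ∈ range db) : diagOp h f x ∈ range db := by
  obtain ⟨y, rfl⟩ := hx
  rw [diagOp_db h db hdeg]
  exact ⟨_, rfl⟩

theorem dp_diagOp (h : DirectSum.IsInternal 𝒱) (dp : V →ₗ[ℂ] V)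
    (hdeg : ∀ a b : ℕ, ∀ x ∈ 𝒱 (a, b), dp x ∈ 𝒱 (a + 1, b)) (f : ℕ × ℕ → ℂ) (x : V) :
    dp (diagOp h f x) = diagOp h (fun i => f (i.1 - 1, i.2)) (dp x) := by
  rw [diagOp_dp h dp hdeg]
  rfl

theorem db_diagOp (h : DirectSum.IsInternal 𝒱) (db : V →ₗ[ℂ] V)
    (hdeg : ∀ a b : ℕ, ∀ x ∈ 𝒱 (a, b), db x ∈ 𝒱 (a, b + 1)) (f : ℕ × ℕ → ℂ) (x : V) :
    db (diagOp h f x) = diagOp h (fun i => f (i.1, i.2 - 1)) (db x) := by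
  rw [diagOp_db h db hdeg]
  rfl

theorem diagOp_d (h : DirectSum.IsInternal 𝒱) (dp db : V →ₗ[ℂ] V)
    (hdpdeg : ∀ a b : ℕ, ∀ x ∈ 𝒱 (a, b), dp x ∈ 𝒱 (a + 1, b))
    (hdbdeg : ∀ a b : ℕ, ∀ x ∈ 𝒱 (a, b), db x ∈ 𝒱 (a, b + 1)) (k : ℕ) (x : V) :
    diagOp h (indTot k) ((dp + db) x) =
      (dp + db) (diagOp h (fun i => if i.1 + i.2 + 1 = k then 1 else 0) x) := by
  rw [LinearMap.add_apply, map_add, diagOp_dp h dp hdpdeg, diagOp_db h db hdbdeg,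
    LinearMap.add_apply]
  have e1 : (fun i : ℕ × ℕ => indTot k (i.1 + 1, i.2)) =
      (fun i => if i.1 + i.2 + 1 = k then 1 else 0) := by
    funext i; simp only [indTot, add_right_comm]
  have e2 : (fun i : ℕ × ℕ => indTot k (i.1, i.2 + 1)) =
      (fun i => if i.1 + i.2 + 1 = k then 1 else 0) := by
    funext i; simp only [indTot, add_assoc]
  rw [e1, e2]

theorem d_diagOp (h : DirectSum.IsInternal 𝒱) (dp db : V →ₗ[ℂ] V)
    (hdpdeg : ∀ a b : ℕ, ∀ x ∈ 𝒱 (a, b), dp x ∈ 𝒱 (a + 1, b))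
    (hdbdeg : ∀ a b : ℕ, ∀ x ∈ 𝒱 (a, b), db x ∈ 𝒱 (a, b + 1)) (k : ℕ) (x : V) :
    (dp + db) (diagOp h (indTot k) x) = diagOp h (indTot (k + 1)) ((dp + db) x) := by
  rw [diagOp_d h dp db hdpdeg hdbdeg]
  congr 3
  funext i
  simp [indTot]

theorem exists_total_sum (h : DirectSum.IsInternal 𝒱) (S : Submodule ℂ V) (φ : V →ₗ[ℂ] V) (x : V)
    (hx : ∀ k, φ (diagOp h (indTot k) x) ∈ S) : φ x ∈ S := by
  have key : ∃ N : ℕ, x = ∑ k ∈ Finset.range N, diagOp h (indTot k) x := by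
    have hx : x ∈ ⨆ i, 𝒱 i := by rw [h.submodule_iSup_eq_top]; trivial
    have : ∃ N : ℕ, ∀ M, N ≤ M → x = ∑ k ∈ Finset.range M, diagOp h (indTot k) x := by
      clear * - hx
      induction hx using Submodule.iSup_induction' with
      | mem i x hx =>
        refine ⟨i.1 + i.2 + 1, fun M hM => ?_⟩
        rw [Finset.sum_eq_single (i.1 + i.2)]
        · simp [diagOp_apply h _ i x hx, indTot]
        · intro b _ hb
          simp [diagOp_apply h _ i x hx, indTot, hb.symm]
        · intro hb; simp at hb; omega
      | zero => exact ⟨0, by simp⟩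
      | add x y _ _ hx hy =>
        obtain ⟨N, hN⟩ := hx
        obtain ⟨N', hN'⟩ := hy
        refine ⟨max N N', fun M hM => ?_⟩
        simp only [map_add, Finset.sum_add_distrib]
        rw [← hN M (by omega), ← hN' M (by omega)]
    obtain ⟨N, hN⟩ := this
    exact ⟨N, hN N le_rfl⟩
  obtain ⟨N, hN⟩ := key
  rw [hN, map_sum]
  exact Submodule.sum_mem _ fun k _ => hx k

theorem deRham_finite (h : DirectSum.IsInternal 𝒱) (dp db : V →ₗ[ℂ] V)
    (hdpdeg : ∀ a b : ℕ, ∀ x ∈ 𝒱 (a, b), dp x ∈ 𝒱 (a + 1, b))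
    (hdbdeg : ∀ a b : ℕ, ∀ x ∈ 𝒱 (a, b), db x ∈ 𝒱 (a, b + 1))
    (hdd : ∀ x, (dp + db) ((dp + db) x) = 0)
    (hfin : ∀ a b : ℕ, qrank (ker db ⊓ 𝒱 (a, b)) (range db) < Cardinal.aleph0) (k : ℕ) :
    qrank (ker (dp + db) ⊓ totalPiece 𝒱 k) (range (dp + db)) < Cardinal.aleph0 := by
  let L : ℕ → ℕ × ℕ → ℂ := fun p i => if i.1 < p then 1 else 0
  let Z : ℕ → Submodule ℂ V := fun p => (ker (dp + db) ⊓ totalPiece 𝒱 k) ⊓ ker (diagOp h (L p))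
  have hmemZ : ∀ p x, x ∈ Z p ↔ ((dp + db) x = 0 ∧ diagOp h (indTot k) x = x) ∧
      diagOp h (L p) x = 0 := by
    intro p x
    rw [← mem_totalPiece]; rfl
  suffices H : ∀ j p, p + j = k + 1 → qrank (Z p) (range (dp + db)) < Cardinal.aleph0 by
    have := H (k + 1) 0 (by omega)
    have e : Z 0 = ker (dp + db) ⊓ totalPiece 𝒱 k := by
      apply le_antisymm inf_le_left
      intro x hx
      refine ⟨hx, ?_⟩
      have : L 0 = 0 := by funext i; simp [L]
      change diagOp h (L 0) x = 0
      rw [this, diagOp_zero]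
    rwa [e] at this
  intro j
  induction j with
  | zero =>
    intro p hp
    have : qrank (Z p) (range (dp + db)) = 0 := by
      apply qrank_eq_zero
      intro x hx
      rw [hmemZ] at hx
      have e : indTot k = indTot k * L p := by
        funext i
        simp only [Pi.mul_apply, indTot, L]
        split_ifs <;> first | omega | simp
      have : x = 0 := by
        rw [← hx.1.2, e, ← diagOp_mul, hx.2, map_zero]
      rw [this]; exact Submodule.zero_mem _
    rw [this]; exact Cardinal.aleph0_pos
  | succ j ih =>
    intro p hp
    obtain ⟨q, hq⟩ : ∃ q, p + q = k := ⟨k - p, by omega⟩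
    have ih := ih (p + 1) (by omega)
    have hle : Z (p + 1) ≤ Z p := by
      intro x hx
      rw [hmemZ] at hx ⊢
      refine ⟨hx.1, ?_⟩
      have e : L p = L p * L (p + 1) := by
        funext i
        simp only [Pi.mul_apply, L]
        split_ifs <;> first | omega | simp
      rw [e, ← diagOp_mul, hx.2, map_zero]
    rw [qrank_add' _ _ _ hle]
    refine Cardinal.add_lt_aleph0 (lt_of_le_of_lt ?_ (hfin p q)) ih
    refine qrank_le_inj _ _ _ _ (diagOp h (indBi (p, q))) ?_ ?_
    · intro x hx
      rw [hmemZ] at hx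
      obtain ⟨⟨hx1, hx2⟩, hx3⟩ := hx
      refine ⟨?_, diagOp_indBi_mem h _ x⟩
      change db _ = 0
      have e1 : db (diagOp h (indBi (p, q)) x) = diagOp h (indBi (p, q + 1)) (db x) := by
        rw [diagOp_db h db hdbdeg]
        congr 3
        funext i
        simp [indBi, Prod.ext_iff]
      have e2 : db x = - dp x := by
        rw [LinearMap.add_apply] at hx1
        exact (neg_eq_of_add_eq_zero_right hx1).symm
      rw [e1, e2, map_neg, diagOp_dp h dp hdpdeg]
      have e3 : (fun i : ℕ × ℕ => indBi (p, q + 1) (i.1 + 1, i.2)) =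
          (fun i : ℕ × ℕ => indBi (p, q + 1) (i.1 + 1, i.2)) * L p := by
        funext i
        simp only [Pi.mul_apply, indBi, L, Prod.mk.injEq]
        split_ifs <;> first | omega | simp
      rw [e3, ← diagOp_mul, hx3, map_zero, map_zero, neg_zero]
    · rintro x hx ⟨β, hβ⟩
      rw [hmemZ] at hx
      obtain ⟨⟨hx1, hx2⟩, hx3⟩ := hx
      let g : ℕ × ℕ → ℂ := fun i => if i.1 = p ∧ i.2 + 1 = q then 1 else 0
      let β' := diagOp h g β
      have hdb : db β' = diagOp h (indBi (p, q)) x := by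
        have e1 : db β' = diagOp h (indBi (p, q)) (db β) := by
          rw [diagOp_db h db hdbdeg]
          change db (diagOp h g β) = _
          congr 3
          funext i
          simp [g, indBi, Prod.ext_iff]
        rw [e1, hβ]
        exact diagOp_indBi_self h _ _ (diagOp_indBi_mem h _ _)
      have : x - (dp + db) β' ∈ Z (p + 1) := by
        rw [hmemZ]
        refine ⟨⟨?_, ?_⟩, ?_⟩
        · rw [map_sub, hx1, hdd, sub_zero]
        · rw [map_sub, hx2, diagOp_d h dp db hdpdeg hdbdeg, diagOp_mul]
          congr 4
          funext i
          simp only [Pi.mul_apply, g]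
          split_ifs <;> first | omega | simp
        · rw [LinearMap.add_apply, hdb, map_sub, map_add, diagOp_dp h dp hdpdeg, diagOp_mul,
            diagOp_mul]
          have e1 : (fun i : ℕ × ℕ => L (p + 1) (i.1 + 1, i.2)) * g = 0 := by
            funext i
            simp only [Pi.mul_apply, g, L, Pi.zero_apply]
            split_ifs <;> first | omega | simp
          have e2 : L (p + 1) * indBi (p, q) = indBi (p, q) := by
            funext i
            simp only [Pi.mul_apply, indBi, L, Prod.ext_iff]
            split_ifs <;> first | omega | simp
          have e3 : L (p + 1) * indTot k = indTot k * L p + indBi (p, q) := by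
            funext i
            simp only [Pi.mul_apply, Pi.add_apply, indBi, indTot, L, Prod.ext_iff]
            split_ifs <;> first | omega | simp
          have e4 : diagOp h (L (p + 1)) x = diagOp h (indBi (p, q)) x := by
            conv_lhs => rw [← hx2]
            rw [diagOp_mul, e3, diagOp_add, ← diagOp_mul, hx3, map_zero, zero_add]
          rw [e1, e2, e4, diagOp_zero, map_zero, zero_add, sub_self]
      have e : x = (dp + db) β' + (x - (dp + db) β') := by abel
      rw [e]
      exact Submodule.add_mem_sup ⟨_, rfl⟩ this

end FrolicherHelpers2

/- STATEMENT 14: (Basic Frölicher-type inequality, formalized at the level of the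
bounded double complex of complex valued basic forms (Ω^{•,•}(M/F,ℂ), ∂, ∂̄) of a
transversely holomorphic foliation, with d = ∂ + ∂̄.)  If the basic Dolbeault
cohomology groups are finite dimensional, then for every k,
  Σ_{p+q=k} (dim H^{p,q}_BC + dim H^{p,q}_A) ≥ 2 dim H^k(M/F, ℂ),
with equality for all k iff the double complex satisfies the ∂∂̄-lemma. -/
theorem basic_frolicher_type_inequality
    {V : Type*} [AddCommGroup V] [Module ℂ V]
    (𝒱 : ℕ × ℕ → Submodule ℂ V) (hinternal : DirectSum.IsInternal 𝒱)
    (hbounded : {ab : ℕ × ℕ | 𝒱 ab ≠ ⊥}.Finite)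
    (dp db : V →ₗ[ℂ] V)
    (hdpdeg : ∀ a b : ℕ, ∀ x ∈ 𝒱 (a, b), dp x ∈ 𝒱 (a + 1, b))
    (hdbdeg : ∀ a b : ℕ, ∀ x ∈ 𝒱 (a, b), db x ∈ 𝒱 (a, b + 1))
    (hdpsq : dp ∘ₗ dp = 0) (hdbsq : db ∘ₗ db = 0)
    (hanti : dp ∘ₗ db + db ∘ₗ dp = 0)
    (hfin : ∀ a b : ℕ,
      qrank (ker db ⊓ 𝒱 (a, b)) (range db) < Cardinal.aleph0 ∧
      qrank (ker dp ⊓ 𝒱 (a, b)) (range dp) < Cardinal.aleph0) :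
    (∀ k : ℕ,
      2 * qrank (ker (dp + db) ⊓ totalPiece 𝒱 k) (range (dp + db)) ≤
        ∑ a ∈ Finset.range (k + 1),
          (qrank (ker dp ⊓ ker db ⊓ 𝒱 (a, k - a)) (range (dp ∘ₗ db)) +
            qrank (ker (dp ∘ₗ db) ⊓ 𝒱 (a, k - a)) (range dp ⊔ range db))) ∧
    ((∀ k : ℕ,
      2 * qrank (ker (dp + db) ⊓ totalPiece 𝒱 k) (range (dp + db)) =
        ∑ a ∈ Finset.range (k + 1),
          (qrank (ker dp ⊓ ker db ⊓ 𝒱 (a, k - a)) (range (dp ∘ₗ db)) +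
            qrank (ker (dp ∘ₗ db) ⊓ 𝒱 (a, k - a)) (range dp ⊔ range db))) ↔
      ker dp ⊓ ker db ⊓ range (dp + db) = range (dp ∘ₗ db)) := by
  -- pointwise identities
  have hpp : ∀ x, dp (dp x) = 0 := fun x => LinearMap.congr_fun hdpsq x
  have hbb : ∀ x, db (db x) = 0 := fun x => LinearMap.congr_fun hdbsq x
  have hbp : ∀ x, db (dp x) = - dp (db x) := fun x =>
    (neg_eq_of_add_eq_zero_right (LinearMap.congr_fun hanti x)).symm
  have hd : ∀ x, (dp + db) x = dp x + db x := fun x => rfl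
  have hdd : ∀ x, (dp + db) ((dp + db) x) = 0 := by
    intro x
    simp only [hd, map_add, hpp, hbb, hbp]
    abel
  have hIE : range (dp ∘ₗ db) ≤ range (dp + db) := by
    rintro _ ⟨y, rfl⟩
    exact ⟨db y, by simp [hbb]⟩
  have hES : range (dp + db) ≤ range dp ⊔ range db := by
    rintro _ ⟨y, rfl⟩
    exact Submodule.add_mem_sup ⟨y, rfl⟩ ⟨y, rfl⟩
  -- stability under diagonal operators
  have sI : ∀ f, ∀ x ∈ range (dp ∘ₗ db), diagOp hinternal f x ∈ range (dp ∘ₗ db) := by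
    rintro f _ ⟨y, rfl⟩
    rw [LinearMap.comp_apply, diagOp_dp hinternal dp hdpdeg, diagOp_db hinternal db hdbdeg]
    exact ⟨_, rfl⟩
  have sS : ∀ f, ∀ x ∈ range dp ⊔ range db, diagOp hinternal f x ∈ range dp ⊔ range db := by
    intro f x hx
    obtain ⟨y, hy, z, hz, rfl⟩ := Submodule.mem_sup.1 hx
    rw [map_add]
    exact Submodule.add_mem_sup (stable_range_dp hinternal dp hdpdeg f y hy)
      (stable_range_db hinternal db hdbdeg f z hz)
  have sZ : ∀ f, ∀ x ∈ ker dp ⊓ ker db, diagOp hinternal f x ∈ ker dp ⊓ ker db := by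
    rintro f x ⟨h1, h2⟩
    have h1 : dp x = 0 := h1
    have h2 : db x = 0 := h2
    constructor
    · change dp _ = 0
      rw [dp_diagOp hinternal dp hdpdeg, h1, map_zero]
    · change db _ = 0
      rw [db_diagOp hinternal db hdbdeg, h2, map_zero]
  have sK : ∀ f, ∀ x ∈ ker (dp ∘ₗ db), diagOp hinternal f x ∈ ker (dp ∘ₗ db) := by
    intro f x hx
    have hx : dp (db x) = 0 := hx
    change dp (db _) = 0
    rw [db_diagOp hinternal db hdbdeg, dp_diagOp hinternal dp hdpdeg, hx, map_zero]
  have sE : ∀ k, ∀ x ∈ range (dp + db), diagOp hinternal (indTot k) x ∈ range (dp + db) := by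
    rintro k _ ⟨y, rfl⟩
    rw [diagOp_d hinternal dp db hdpdeg hdbdeg]
    exact ⟨_, rfl⟩
  have sD : ∀ k, ∀ x ∈ ker (dp + db), diagOp hinternal (indTot k) x ∈ ker (dp + db) := by
    intro k x hx
    have hx : (dp + db) x = 0 := hx
    change (dp + db) _ = 0
    rw [d_diagOp hinternal dp db hdpdeg hdbdeg, hx, map_zero]
  have hQ : ∀ k x, x ∈ totalPiece 𝒱 k ↔ diagOp hinternal (indTot k) x = x :=
    fun k x => mem_totalPiece hinternal k x
  have hQQ : ∀ k x, diagOp hinternal (indTot k) x ∈ totalPiece 𝒱 k := by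
    intro k x
    rw [hQ, diagOp_mul]
    congr 2
    funext i
    simp [indTot]
  -- the weight operator
  obtain ⟨T, hTdef⟩ : ∃ T, T = diagOp hinternal (fun i => (i.1 : ℂ)) := ⟨_, rfl⟩
  have sT : ∀ k, ∀ x ∈ totalPiece 𝒱 k, T x ∈ totalPiece 𝒱 k := by
    intro k x hx
    rw [hQ] at hx ⊢
    conv_rhs => rw [← hx]
    rw [hTdef, diagOp_mul, diagOp_mul, mul_comm]
  have hQT : ∀ k x, diagOp hinternal (indTot k) (T x) = T (diagOp hinternal (indTot k) x) := by
    intro k x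
    rw [hTdef, diagOp_mul, diagOp_mul, mul_comm]
  have hTp : ∀ x, T (dp x) = dp (T x) + dp x := by
    intro x
    have e : (fun i : ℕ × ℕ => (((i.1 + 1, i.2) : ℕ × ℕ).1 : ℂ)) = (fun i => (i.1 : ℂ)) + 1 := by
      funext i; simp
    have e1 : diagOp hinternal 1 x = x := by
      refine lin_ext hinternal (diagOp hinternal 1) LinearMap.id (fun i x hx => ?_) x
      simp [diagOp_apply hinternal _ i x hx]
    rw [hTdef, diagOp_dp hinternal dp hdpdeg, e, diagOp_add, e1, map_add]
  have hTb : ∀ x, T (db x) = db (T x) := by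
    intro x
    rw [hTdef, diagOp_db hinternal db hdbdeg]
  have hTd : ∀ x, T ((dp + db) x) = (dp + db) (T x) + dp x := by
    intro x
    simp only [hd, map_add, hTp, hTb]; abel
  have tZ : ∀ x ∈ ker dp ⊓ ker db, T x ∈ ker dp ⊓ ker db := by rw [hTdef]; exact sZ _
  have tK : ∀ x ∈ ker (dp ∘ₗ db), T x ∈ ker (dp ∘ₗ db) := by rw [hTdef]; exact sK _
  have tI : ∀ x ∈ range (dp ∘ₗ db), T x ∈ range (dp ∘ₗ db) := by rw [hTdef]; exact sI _
  have hZD : ker dp ⊓ ker db ≤ ker (dp + db) := by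
    rintro x ⟨h1, h2⟩
    have h1 : dp x = 0 := h1
    have h2 : db x = 0 := h2
    change dp x + db x = 0
    rw [h1, h2, add_zero]
  have hDK : ker (dp + db) ≤ ker (dp ∘ₗ db) := by
    intro x hx
    have hx : dp x + db x = 0 := hx
    change dp (db x) = 0
    have := congrArg dp hx
    simpa [hpp] using this
  have hZ' : ∀ x, dp x = 0 → (dp + db) x = 0 → x ∈ ker dp ⊓ ker db := by
    intro x h1 h2
    refine ⟨h1, ?_⟩
    change db x = 0
    simpa [hd, h1] using h2
  have hKZ : ∀ x ∈ ker (dp ∘ₗ db), (dp + db) x ∈ ker dp ⊓ ker db := by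
    intro x hx
    have hx : dp (db x) = 0 := hx
    apply hZ' _ _ (hdd x)
    rw [hd, map_add, hpp, hx, add_zero]
  -- abbreviations in degree k
  let Z : ℕ → Submodule ℂ V := fun k => ker dp ⊓ ker db ⊓ totalPiece 𝒱 k
  let D : ℕ → Submodule ℂ V := fun k => ker (dp + db) ⊓ totalPiece 𝒱 k
  let K : ℕ → Submodule ℂ V := fun k => ker (dp ∘ₗ db) ⊓ totalPiece 𝒱 k
  obtain ⟨E, hE⟩ : ∃ E, E = range (dp + db) := ⟨_, rfl⟩
  obtain ⟨I, hI⟩ : ∃ I, I = range (dp ∘ₗ db) := ⟨_, rfl⟩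
  obtain ⟨S, hS⟩ : ∃ S, S = range dp ⊔ range db := ⟨_, rfl⟩
  have hsum : ∀ k, ∑ a ∈ Finset.range (k + 1),
          (qrank (ker dp ⊓ ker db ⊓ 𝒱 (a, k - a)) (range (dp ∘ₗ db)) +
            qrank (ker (dp ∘ₗ db) ⊓ 𝒱 (a, k - a)) (range dp ⊔ range db)) =
      qrank (Z k) I + qrank (K k) S := by
    intro k
    rw [Finset.sum_add_distrib, qrank_total hinternal k _ _ sZ sI,
      qrank_total hinternal k _ _ sK sS, hI, hS]
  simp only [hsum]
  rw [← hE] at hIE hES sE ⊢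
  rw [← hI] at hIE tI ⊢
  rw [← hS] at hES sS
  -- decompositions
  have hBC : ∀ k, qrank (Z k) I = qrank (Z k) E + qrank (Z k ⊓ E) I :=
    fun k => qrank_add _ _ _ hIE
  have hb1 : ∀ k, qrank (D k) E = qrank (D k) (E ⊔ Z k) + qrank (Z k) E :=
    fun k => qrank_add' _ _ _ (inf_le_inf_right _ hZD)
  have hb2 : ∀ k, qrank (D k) E = qrank (D k) S + qrank (D k ⊓ S) E :=
    fun k => qrank_add _ _ _ hES
  have hA : ∀ k, qrank (K k) S = qrank (K k) (S ⊔ D k) + qrank (D k) S :=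
    fun k => qrank_add' _ _ _ (inf_le_inf_right _ hDK)
  -- T : coker(BC → H) → coker(H → A)
  have j1 : ∀ k, ∀ x ∈ D k, T x ∈ K k := fun k x hx => ⟨tK _ (hDK hx.1), sT k _ hx.2⟩
  have j2 : ∀ k, ∀ x ∈ D k, x ∈ E ⊔ Z k → T x ∈ S ⊔ D k := by
    intro k x hx hx'
    obtain ⟨y, hy, z, hz, rfl⟩ := Submodule.mem_sup.1 hx'
    rw [hE] at hy
    obtain ⟨u, rfl⟩ := hy
    have hTz : T z ∈ D k := ⟨hZD (tZ _ hz.1), sT k _ hz.2⟩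
    rw [map_add]
    refine Submodule.add_mem _ ?_ (Submodule.mem_sup_right hTz)
    apply Submodule.mem_sup_left
    rw [hTd]
    refine Submodule.add_mem _ (hES (by rw [hE]; exact ⟨_, rfl⟩)) ?_
    rw [hS]; exact Submodule.mem_sup_left ⟨_, rfl⟩
  have j3 : ∀ k, ∀ x ∈ D k, T x ∈ S ⊔ D k → x ∈ E ⊔ Z k := by
    intro k x hx hx'
    obtain ⟨y, hy, γ, hγ, hsum'⟩ := Submodule.mem_sup.1 hx'
    rw [hS] at hy
    obtain ⟨_, ⟨u, rfl⟩, _, ⟨v, rfl⟩, rfl⟩ := Submodule.mem_sup.1 hy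
    have hγ0 : (dp + db) γ = 0 := hγ.1
    have hx0 : (dp + db) x = 0 := hx.1
    have e := hTd x
    rw [hx0, map_zero, ← hsum', map_add, hγ0, hd] at e
    simp only [map_add, hpp, hbb, hbp] at e
    have e' : dp x = dp (db (u - v)) := by
      simp only [map_sub]
      rw [eq_comm, ← sub_eq_zero] at e
      rw [← sub_eq_zero, ← e]; abel
    have hz : x - (dp + db) (u - v) ∈ ker dp ⊓ ker db := by
      apply hZ'
      · rw [map_sub, hd, map_add, hpp, zero_add, e', sub_self]
      · rw [map_sub, hx0, hdd, sub_zero]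
    have ex : x = diagOp hinternal (indTot k) ((dp + db) (u - v)) +
        diagOp hinternal (indTot k) (x - (dp + db) (u - v)) := by
      rw [← map_add, add_sub_cancel, (hQ k x).1 hx.2]
    rw [ex]
    exact Submodule.add_mem_sup (sE k _ (by rw [hE]; exact ⟨_, rfl⟩)) ⟨sZ _ _ hz, hQQ k _⟩
  have jle : ∀ k, qrank (D k) (E ⊔ Z k) ≤ qrank (K k) (S ⊔ D k) :=
    fun k => qrank_le_inj _ _ _ _ T (j1 k) (j3 k)
  -- T : ker(BC → H) → ker(H → A)
  have s1 : ∀ k, ∀ x ∈ Z k ⊓ E, T x ∈ D k ⊓ S := by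
    rintro k x ⟨hx, hx'⟩
    refine ⟨⟨hZD (tZ _ hx.1), sT k _ hx.2⟩, ?_⟩
    have hx' : x ∈ E := hx'
    rw [hE] at hx'
    obtain ⟨u, rfl⟩ := hx'
    change T _ ∈ S
    rw [hTd]
    refine Submodule.add_mem _ (hES (by rw [hE]; exact ⟨_, rfl⟩)) ?_
    rw [hS]; exact Submodule.mem_sup_left ⟨_, rfl⟩
  have s2 : ∀ k, ∀ x ∈ Z k ⊓ E, x ∈ I → T x ∈ E := fun k x _ hx => hIE (tI _ hx)
  have s3 : ∀ k, ∀ y ∈ D k ⊓ S, ∃ x ∈ Z k ⊓ E, y - T x ∈ E := by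
    rintro k y ⟨hy, hy'⟩
    have hy' : y ∈ S := hy'
    rw [hS] at hy'
    obtain ⟨_, ⟨u, rfl⟩, _, ⟨v, rfl⟩, hyuv⟩ := Submodule.mem_sup.1 hy'
    have hy0 : (dp + db) y = 0 := hy.1
    have e : y = (dp + db) v + dp (u - v) := by
      rw [← hyuv, hd, map_sub]; abel
    have hw : dp (db (u - v)) = 0 := by
      have := hy0
      rw [e, map_add, hdd, zero_add, hd, hpp, zero_add, hbp] at this
      exact neg_eq_zero.1 this
    refine ⟨diagOp hinternal (indTot k) ((dp + db) (u - v)),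
      ⟨⟨sZ _ _ (hKZ _ hw), hQQ k _⟩, sE k _ (by rw [hE]; exact ⟨_, rfl⟩)⟩, ?_⟩
    have e2 : y - T (diagOp hinternal (indTot k) ((dp + db) (u - v))) =
        diagOp hinternal (indTot k) ((dp + db) (v - T (u - v))) := by
      rw [← hQT, hTd]
      conv_lhs => rw [← (hQ k y).1 hy.2]
      rw [← map_sub]
      congr 1
      rw [e, map_sub (dp + db) v]
      abel
    rw [e2]
    exact sE k _ (by rw [hE]; exact ⟨_, rfl⟩)
  have sle : ∀ k, qrank (D k ⊓ S) E ≤ qrank (Z k ⊓ E) I :=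
    fun k => qrank_le_surj _ _ _ _ T (s1 k) (s2 k) (s3 k)
  have hbfin : ∀ k, qrank (D k) E < Cardinal.aleph0 := by
    intro k
    rw [hE]
    exact deRham_finite hinternal dp db hdpdeg hdbdeg hdd (fun a b => (hfin a b).1) k
  change (∀ k, 2 * qrank (D k) E ≤ _) ∧ ((∀ k, 2 * qrank (D k) E = _) ↔ _)
  refine ⟨fun k => ?_, ?_, ?_⟩
  · rw [two_mul]
    nth_rewrite 1 [hb1]
    rw [hb2, hBC, hA]
    calc _ = qrank (Z k) E + qrank (D k ⊓ S) E + (qrank (D k) (E ⊔ Z k) + qrank (D k) S) := by ring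
      _ ≤ _ := add_le_add (add_le_add le_rfl (sle k)) (add_le_add (jle k) le_rfl)
  · intro heq
    have hcard : ∀ k, qrank (D k) (E ⊔ Z k) < Cardinal.aleph0 ∧
        qrank (Z k ⊓ E) I < Cardinal.aleph0 ∧
        qrank (D k) (E ⊔ Z k) = qrank (K k) (S ⊔ D k) ∧
        qrank (Z k ⊓ E) I = qrank (D k ⊓ S) E := by
      intro k
      have hf := hbfin k
      have h2 : qrank (Z k) I + qrank (K k) S < Cardinal.aleph0 := by
        rw [← heq k]
        exact Cardinal.mul_lt_aleph0 (Cardinal.natCast_lt_aleph0 (n := 2)) hf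
      have h0 := heq k
      have h1 := hb1 k
      have h3 := hb2 k
      have h4 := jle k
      have h5 := sle k
      rw [hBC, hA] at h2 h0
      rw [Cardinal.add_lt_aleph0_iff, Cardinal.add_lt_aleph0_iff, Cardinal.add_lt_aleph0_iff] at h2
      obtain ⟨⟨f1, f2⟩, f3, f4⟩ := h2
      have f5 := lt_of_le_of_lt h4 f3
      have f6 := lt_of_le_of_lt h5 f2
      refine ⟨f5, f2, ?_⟩
      obtain ⟨n0, g0⟩ := Cardinal.lt_aleph0.1 hf
      obtain ⟨n1, g1⟩ := Cardinal.lt_aleph0.1 f1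
      obtain ⟨n2, g2⟩ := Cardinal.lt_aleph0.1 f2
      obtain ⟨n3, g3⟩ := Cardinal.lt_aleph0.1 f3
      obtain ⟨n4, g4⟩ := Cardinal.lt_aleph0.1 f4
      obtain ⟨n5, g5⟩ := Cardinal.lt_aleph0.1 f5
      obtain ⟨n6, g6⟩ := Cardinal.lt_aleph0.1 f6
      simp only [g0, g1, g2, g3, g4, g5, g6] at h0 h1 h3 h4 h5 ⊢
      norm_cast at h0 h1 h3 h4 h5 ⊢
      omega
    have hmain : ∀ k, ∀ y ∈ K k, (dp + db) y ∈ I := by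
      intro k y hy
      obtain ⟨c1, -, c2, -⟩ := hcard k
      obtain ⟨α, hα, hyα⟩ := (qrank_bij _ _ _ _ T (j1 k) (j2 k) c1 c2).1 (j3 k) y hy
      obtain ⟨s, hs, γ, hγ, hsum'⟩ := Submodule.mem_sup.1 hyα
      rw [hS] at hs
      obtain ⟨_, ⟨u, rfl⟩, _, ⟨v, rfl⟩, rfl⟩ := Submodule.mem_sup.1 hs
      have hγ0 : (dp + db) γ = 0 := hγ.1
      have hα0 : (dp + db) α = 0 := hα.1
      have ey : y = dp u + db v + γ + T α := by rw [hsum']; abel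
      have hTα : (dp + db) (T α) = - dp α := by
        have := hTd α
        rw [hα0, map_zero] at this
        exact eq_neg_of_add_eq_zero_left this.symm
      have hαI : dp α ∈ I := by
        obtain ⟨-, c3, -, c4⟩ := hcard (k + 1)
        have inj := (qrank_bij _ _ _ _ T (s1 (k + 1)) (s2 (k + 1)) c3 c4).2 (s3 (k + 1))
        have hdpE : dp α ∈ E := by
          rw [hE]; exact ⟨- T α, by rw [map_neg, hTα, neg_neg]⟩
        apply inj
        · refine ⟨⟨?_, ?_⟩, hdpE⟩
          · have := hKZ _ (tK _ (hDK hα.1))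
            rw [hTα] at this
            exact (Submodule.neg_mem_iff _).1 this
          · have h1 := d_diagOp hinternal dp db hdpdeg hdbdeg k (T α)
            rw [(hQ k _).1 (sT k _ hα.2), hTα, map_neg] at h1
            exact (hQ _ _).2 (neg_injective h1).symm
        · have h1 := hTd (T α)
          rw [hTα, map_neg] at h1
          have h2 := hTp α
          -- d(T²α) = -T∂α - ∂Tα = -2T∂α + ∂α
          have h3 : T (dp α) = (2 : ℂ)⁻¹ • (dp α - (dp + db) (T (T α))) := by
            rw [eq_inv_smul_iff₀ two_ne_zero, two_smul]
            have h4 : (dp + db) (T (T α)) = - T (dp α) - dp (T α) := by rw [h1]; abel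
            rw [h4]
            nth_rewrite 1 [h2]
            abel
          rw [h3]
          refine Submodule.smul_mem _ _ (Submodule.sub_mem _ hdpE ?_)
          rw [hE]; exact ⟨_, rfl⟩
      have e3 : (dp + db) y = dp (db (v - u)) - dp α := by
        rw [ey, map_add, map_add, hγ0, hTα, hd]
        simp only [map_add, map_sub, hpp, hbb, hbp]
        abel
      rw [e3]
      refine Submodule.sub_mem _ ?_ hαI
      rw [hI]; exact ⟨_, rfl⟩
    apply le_antisymm
    · rintro x ⟨hx, hx'⟩
      have hx' : x ∈ E := hx'
      rw [hE] at hx'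
      obtain ⟨y, rfl⟩ := hx'
      apply exists_total_sum hinternal
      intro k
      apply hmain k
      refine ⟨sK _ _ ?_, hQQ k y⟩
      have : dp ((dp + db) y) = 0 := hx.1
      rw [hd, map_add, hpp, zero_add] at this
      exact this
    · refine le_inf ?_ hIE
      rw [hI]
      rintro _ ⟨y, rfl⟩
      apply hZ'
      · simp [hpp]
      · simp [hpp, hbp, hbb]
  · intro hL k
    have hk1 : qrank (Z k ⊓ E) I = 0 := by
      apply qrank_eq_zero
      rw [← hL]
      exact inf_le_inf_right _ inf_le_left
    have hk2 : qrank (D k ⊓ S) E = 0 := le_antisymm (hk1 ▸ sle k) zero_le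
    have hdI : ∀ y ∈ ker (dp ∘ₗ db), (dp + db) y ∈ I := by
      intro y hy
      rw [← hL]
      exact ⟨hKZ _ hy, by rw [hE]; exact ⟨_, rfl⟩⟩
    have hc2 : qrank (K k) (S ⊔ D k) = 0 := by
      apply qrank_eq_zero
      rintro y ⟨hy, hyk⟩
      have h1 := hdI y hy
      have h2 := hdI _ (tK y hy)
      have h3 : dp y ∈ I := by
        have := tI _ h1
        rw [hTd] at this
        exact (Submodule.add_mem_iff_right _ h2).1 this
      have h4 : db y ∈ I := by
        rw [hd] at h1
        exact (Submodule.add_mem_iff_right _ h3).1 h1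
      rw [hI] at h3 h4
      obtain ⟨β, hβ⟩ := h3
      obtain ⟨γ, hγ⟩ := h4
      have hβ : dp (db β) = dp y := hβ
      have hγ : dp (db γ) = db y := hγ
      have h5 : y - db β + dp γ ∈ ker (dp + db) := by
        change (dp + db) _ = 0
        simp only [hd, map_add, map_sub, hpp, hbb, hbp, hβ, hγ]
        abel
      have ey : y = diagOp hinternal (indTot k) (db β - dp γ) +
          diagOp hinternal (indTot k) (y - db β + dp γ) := by
        rw [← map_add]
        conv_lhs => rw [← (hQ k y).1 hyk]
        congr 1
        abel
      rw [ey]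
      refine Submodule.add_mem_sup (sS _ _ ?_) ⟨sD k _ h5, hQQ k _⟩
      rw [hS]
      exact Submodule.sub_mem _ (Submodule.mem_sup_right ⟨_, rfl⟩) (Submodule.mem_sup_left ⟨_, rfl⟩)
    have hc1 : qrank (D k) (E ⊔ Z k) = 0 := le_antisymm (hc2 ▸ jle k) zero_le
    have h1 := hb1 k
    have h2 := hb2 k
    rw [hc1, zero_add] at h1
    rw [hk2, add_zero] at h2
    rw [hBC, hA, hk1, hc2, add_zero, zero_add, ← h1, ← h2, two_mul]
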